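/- For 0 ≤ i < j ≤ n+2 and 0 ≤ i′ < j′ ≤ n+2 with (i,j) ≠ (i′,j′), there exists an irreducible morphism M(i+1, j) → M(i′+1, j′) in rep Q if and only if the segment γ(i′,j′) is a pivot of the segment γ(i,j). -/

import Mathlib

open scoped Classical

noncomputable section

namespace CambrianA

/-! ### Combinatorics of a type `A_{n+2}` quiver.

Vertices are `1, …, n+2`.  For `1 ≤ i ≤ n+1`, `ε i = true` means that the arrow between
`i` and `i+1` is oriented `i → i+1` (`i` is *upper-barred*), and `ε i = false` means it is
oriented `(i+1) → i` (`i` is *lower-barred*). -/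

/-- `MaxIncr n ε i j` : the path `i → i+1 → ⋯ → j` is a maximal increasing path of `Q`. -/
def MaxIncr (n : ℕ) (ε : ℕ → Bool) (i j : ℕ) : Prop :=
  1 ≤ i ∧ i ≤ j ∧ j ≤ n + 2 ∧ (∀ ℓ, i ≤ ℓ → ℓ < j → ε ℓ = true) ∧
    (i = 1 ∨ ε (i - 1) = false) ∧ (j = n + 2 ∨ ε j = false)

/-- `MaxDecr n ε i j` : the path `i → i-1 → ⋯ → j` is a maximal decreasing path of `Q`. -/
def MaxDecr (n : ℕ) (ε : ℕ → Bool) (i j : ℕ) : Prop :=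
  1 ≤ j ∧ j ≤ i ∧ i ≤ n + 2 ∧ (∀ ℓ, j ≤ ℓ → ℓ < i → ε ℓ = false) ∧
    (i = n + 2 ∨ ε i = true) ∧ (j = 1 ∨ ε (j - 1) = true)

/-- Vertices of the polygon lying on the lower boundary: `0`, `n+2` and lower-barred ones. -/
def LowerVertex (n : ℕ) (ε : ℕ → Bool) (x : ℕ) : Prop :=
  x = 0 ∨ x = n + 2 ∨ (1 ≤ x ∧ x ≤ n + 1 ∧ ε x = false)

/-- Vertices of the polygon lying on the upper boundary: `0`, `n+2` and upper-barred ones. -/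
def UpperVertex (n : ℕ) (ε : ℕ → Bool) (x : ℕ) : Prop :=
  x = 0 ∨ x = n + 2 ∨ (1 ≤ x ∧ x ≤ n + 1 ∧ ε x = true)

/-- `(a,b)` is a lower boundary edge: `a < b` are consecutive lower vertices. -/
def LowerEdge (n : ℕ) (ε : ℕ → Bool) (a b : ℕ) : Prop :=
  LowerVertex n ε a ∧ LowerVertex n ε b ∧ a < b ∧
    ∀ c, LowerVertex n ε c → ¬(a < c ∧ c < b)

/-- `(a,b)` is an upper boundary edge: `a < b` are consecutive upper vertices. -/
def UpperEdge (n : ℕ) (ε : ℕ → Bool) (a b : ℕ) : Prop :=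
  UpperVertex n ε a ∧ UpperVertex n ε b ∧ a < b ∧
    ∀ c, UpperVertex n ε c → ¬(a < c ∧ c < b)

def BoundaryEdge (n : ℕ) (ε : ℕ → Bool) (a b : ℕ) : Prop :=
  LowerEdge n ε a b ∨ UpperEdge n ε a b

/-- `IsHook n ε a lo hi` : the hook of the arrow of `Q` between `a` and `a+1` is the
maximal path supported on the interval `[lo, hi]`.
If `ε a = true` (arrow `a → a+1`, source `a`), the hook is the maximal decreasing path
starting at `a`; if `ε a = false` (arrow `a+1 → a`, source `a+1`), the hook is the
maximal increasing path starting at `a+1`. -/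
def IsHook (n : ℕ) (ε : ℕ → Bool) (a lo hi : ℕ) : Prop :=
  if ε a = true then
    hi = a ∧ 1 ≤ lo ∧ lo ≤ a ∧ (∀ ℓ, lo ≤ ℓ → ℓ < a → ε ℓ = false) ∧
      (lo = 1 ∨ ε (lo - 1) = true)
  else
    lo = a + 1 ∧ a + 1 ≤ hi ∧ hi ≤ n + 2 ∧ (∀ ℓ, a + 1 ≤ ℓ → ℓ < hi → ε ℓ = true) ∧
      (hi = n + 2 ∨ ε hi = false)

/-- `IsCohook n ε a lo hi` : the cohook of the arrow of `Q` between `a` and `a+1` is the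
maximal path supported on the interval `[lo, hi]`, ending at the target of the arrow. -/
def IsCohook (n : ℕ) (ε : ℕ → Bool) (a lo hi : ℕ) : Prop :=
  if ε a = true then
    lo = a + 1 ∧ a + 1 ≤ hi ∧ hi ≤ n + 2 ∧ (∀ ℓ, a + 1 ≤ ℓ → ℓ < hi → ε ℓ = false) ∧
      (hi = n + 2 ∨ ε hi = true)
  else
    hi = a ∧ 1 ≤ lo ∧ lo ≤ a ∧ (∀ ℓ, lo ≤ ℓ → ℓ < a → ε ℓ = true) ∧
      (lo = 1 ∨ ε (lo - 1) = false)

/-- Counterclockwise neighbor `R⁻¹(ℓ)` of the vertex `ℓ` of the polygon `P(Q)`, for the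
cyclic order `0`, lower-barred vertices increasing, `n+2`, upper-barred vertices
decreasing. -/
def Rinv (n : ℕ) (ε : ℕ → Bool) (ℓ : ℕ) : ℕ :=
  if ℓ = n + 2 then sSup ({0} ∪ {x | 1 ≤ x ∧ x ≤ n + 1 ∧ ε x = true})
  else if 1 ≤ ℓ ∧ ℓ ≤ n + 1 ∧ ε ℓ = true then
    sSup ({0} ∪ {x | 1 ≤ x ∧ x < ℓ ∧ ε x = true})
  else
    sInf ({n + 2} ∪ {x | ℓ < x ∧ x ≤ n + 1 ∧ ε x = false})

/-- `γ(i′,j′)` is a pivot of `γ(i,j)`. -/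
def IsPivot (n : ℕ) (ε : ℕ → Bool) (i j i' j' : ℕ) : Prop :=
  (i' = Rinv n ε i ∧ j' = j ∧ Rinv n ε i < j) ∨
    (i' = i ∧ j' = Rinv n ε j ∧ i < Rinv n ε j)

/-! ### Geometry of the polygon `P(Q)`.

The plane is identified with `ℂ`; `p x` is the vertex of the polygon labeled `x`,
for `0 ≤ x ≤ n+2`. -/

/-- The hypotheses on the points `p 0, …, p (n+2)` realizing the polygon `P(Q)`:
strictly increasing `x`-coordinates; `p 0` and `p (n+2)` on a common horizontal line `L`;
upper-barred vertices above `L`, lower-barred vertices below `L`; convex position. -/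
def PolyPts (n : ℕ) (ε : ℕ → Bool) (p : ℕ → ℂ) : Prop :=
  (∀ a b, a < b → b ≤ n + 2 → (p a).re < (p b).re) ∧
    (p (n + 2)).im = (p 0).im ∧
    (∀ i, 1 ≤ i → i ≤ n + 1 →
      (ε i = true → (p 0).im < (p i).im) ∧ (ε i = false → (p i).im < (p 0).im)) ∧
    ∀ i, i ≤ n + 2 → p i ∉ convexHull ℝ (p '' {j | j ≤ n + 2 ∧ j ≠ i})

/-- The line segment `γ(e.1, e.2)` of the polygon. -/
def Seg (p : ℕ → ℂ) (e : ℕ × ℕ) : Set ℂ := segment ℝ (p e.1) (p e.2)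

/-- Two segments cross when they intersect in a point that is not a common endpoint. -/
def Cross (p : ℕ → ℂ) (e f : ℕ × ℕ) : Prop :=
  ∃ z, z ∈ Seg p e ∧ z ∈ Seg p f ∧
    ¬((z = p e.1 ∨ z = p e.2) ∧ (z = p f.1 ∨ z = p f.2))

/-- Slope of the segment `γ(e.1, e.2)`. -/
def slope (p : ℕ → ℂ) (e : ℕ × ℕ) : ℝ :=
  ((p e.2).im - (p e.1).im) / ((p e.2).re - (p e.1).re)

def ValidPair (n : ℕ) (e : ℕ × ℕ) : Prop := e.1 < e.2 ∧ e.2 ≤ n + 2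

/-- A triangulation of `P(Q)`: a maximal collection of pairwise noncrossing segments. -/
def IsTriangulation (n : ℕ) (p : ℕ → ℂ) (T : Finset (ℕ × ℕ)) : Prop :=
  (∀ e ∈ T, ValidPair n e) ∧ (∀ e ∈ T, ∀ f ∈ T, e ≠ f → ¬Cross p e f) ∧
    ∀ e, ValidPair n e → e ∉ T → ∃ f ∈ T, Cross p e f

/-- Cross product of two planar vectors; positive iff `(u, v)` is counterclockwise. -/
def cross2 (u v : ℂ) : ℝ := u.re * v.im - u.im * v.re

/-- Arrows of the adjacency quiver `Q(T)` of a triangulation `T`: `e → f` whenever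
`e` and `f` are sides of a common triangle of `T` and `f` follows `e` going
counterclockwise around that triangle. -/
def TriArrow (p : ℕ → ℂ) (T : Finset (ℕ × ℕ)) (e f : ℕ × ℕ) : Prop :=
  ∃ a b c : ℕ, a < b ∧ b < c ∧ (a, b) ∈ T ∧ (b, c) ∈ T ∧ (a, c) ∈ T ∧
    ((0 < cross2 (p b - p a) (p c - p a) ∧
        ((e = (a, b) ∧ f = (b, c)) ∨ (e = (b, c) ∧ f = (a, c)) ∨
          (e = (a, c) ∧ f = (a, b)))) ∨
      (cross2 (p b - p a) (p c - p a) < 0 ∧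
        ((e = (a, c) ∧ f = (b, c)) ∨ (e = (b, c) ∧ f = (a, b)) ∨
          (e = (a, b) ∧ f = (a, c)))))

/-! ### Representations of `Q` -/

/-- A finite dimensional representation of the quiver `Q` of type `A_{n+2}` over `k`.
The vector spaces are indexed by `ℕ`, and are required to vanish outside the set
`{1, …, n+2}` of vertices of `Q`.  For each `i`, `fwd i : V i → V (i+1)` is the structure
map of the arrow `i → i+1` (it is required to vanish when the arrow is oriented in the
other direction, i.e. `ε i = false`) and `bwd i : V (i+1) → V i` is the structure map of
the arrow `i+1 → i` (required to vanish when `ε i = true`). -/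
structure ARep (k : Type) [Field k] (n : ℕ) (ε : ℕ → Bool) where
  V : ℕ → Type
  [acg : ∀ x, AddCommGroup (V x)]
  [mod : ∀ x, Module k (V x)]
  [fdim : ∀ x, FiniteDimensional k (V x)]
  triv : ∀ x, x = 0 ∨ n + 2 < x → ∀ v : V x, v = 0
  fwd : ∀ i, V i →ₗ[k] V (i + 1)
  bwd : ∀ i, V (i + 1) →ₗ[k] V i
  fwd_zero : ∀ i, ε i = false → fwd i = 0
  bwd_zero : ∀ i, ε i = true → bwd i = 0

attribute [instance] ARep.acg ARep.mod ARep.fdim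

variable {k : Type} [Field k] {n : ℕ} {ε : ℕ → Bool}

/-- Morphisms of representations. -/
@[ext]
structure ARep.Hom (M N : ARep k n ε) where
  app : ∀ x, M.V x →ₗ[k] N.V x
  comm_fwd : ∀ i (v : M.V i), app (i + 1) (M.fwd i v) = N.fwd i (app i v)
  comm_bwd : ∀ i (v : M.V (i + 1)), app i (M.bwd i v) = N.bwd i (app (i + 1) v)

/-- The identity morphism. -/
def ARep.Hom.id (M : ARep k n ε) : M.Hom M :=
  ⟨fun _ => LinearMap.id, fun _ _ => rfl, fun _ _ => rfl⟩

/-- Composition of morphisms. -/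
def ARep.Hom.comp {M N P : ARep k n ε} (g : N.Hom P) (f : M.Hom N) : M.Hom P where
  app x := (g.app x).comp (f.app x)
  comm_fwd i v := by simp only [LinearMap.comp_apply, f.comm_fwd, g.comm_fwd]
  comm_bwd i v := by simp only [LinearMap.comp_apply, f.comm_bwd, g.comm_bwd]

/-- Sum of two morphisms. -/
def ARep.Hom.add {M N : ARep k n ε} (f g : M.Hom N) : M.Hom N where
  app x := f.app x + g.app x
  comm_fwd i v := by
    simp only [LinearMap.add_apply, f.comm_fwd, g.comm_fwd, map_add]
  comm_bwd i v := by
    simp only [LinearMap.add_apply, f.comm_bwd, g.comm_bwd, map_add]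

/-- Scalar multiple of a morphism. -/
def ARep.Hom.smul {M N : ARep k n ε} (c : k) (f : M.Hom N) : M.Hom N where
  app x := c • f.app x
  comm_fwd i v := by simp only [LinearMap.smul_apply, f.comm_fwd, map_smul]
  comm_bwd i v := by simp only [LinearMap.smul_apply, f.comm_bwd, map_smul]

/-- Isomorphism of representations. -/
def ARep.Iso (M N : ARep k n ε) : Prop :=
  ∃ f : M.Hom N, ∀ x, Function.Bijective (f.app x)

/-- The zero representation(s). -/
def ARep.IsZero (M : ARep k n ε) : Prop := ∀ x, ∀ v : M.V x, v = 0

/-- The support of a representation. -/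
def ARep.supp (M : ARep k n ε) : Set ℕ := {x | ∃ v : M.V x, v ≠ 0}

/-- Direct sum of two representations. -/
def ARep.dsum (M N : ARep k n ε) : ARep k n ε where
  V x := M.V x × N.V x
  acg _ := by infer_instance
  mod _ := by infer_instance
  fdim _ := by infer_instance
  triv x hx v := by
    have h1 := M.triv x hx v.1
    have h2 := N.triv x hx v.2
    exact Prod.ext h1 h2
  fwd i := (M.fwd i).prodMap (N.fwd i)
  bwd i := (M.bwd i).prodMap (N.bwd i)
  fwd_zero i h := by
    show (M.fwd i).prodMap (N.fwd i) = 0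
    rw [M.fwd_zero i h, N.fwd_zero i h]
    apply LinearMap.ext; rintro ⟨a, b⟩; simp
  bwd_zero i h := by
    show (M.bwd i).prodMap (N.bwd i) = 0
    rw [M.bwd_zero i h, N.bwd_zero i h]
    apply LinearMap.ext; rintro ⟨a, b⟩; simp

/-- One dimensional space `k` if `P` holds, `0` otherwise (as a submodule of `k`). -/
def fiber (k : Type) [Field k] (P : Prop) : Submodule k k := if P then ⊤ else ⊥

/-- The canonical map `fiber k P → fiber k Q` : "identity" if `P ∧ Q`, zero otherwise. -/
def fiberMap (k : Type) [Field k] (P Q : Prop) : fiber k P →ₗ[k] fiber k Q :=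
  if h : P ∧ Q then
    { toFun := fun v => ⟨(v : k), by
        have hQ : fiber k Q = ⊤ := if_pos h.2
        rw [hQ]; exact Submodule.mem_top⟩
      map_add' := fun _ _ => rfl
      map_smul' := fun _ _ => rfl }
  else 0

/-- The zero representation. -/
def zeroRep (k : Type) [Field k] (n : ℕ) (ε : ℕ → Bool) : ARep k n ε where
  V _ := ↥(fiber k False)
  acg _ := by infer_instance
  mod _ := by infer_instance
  fdim _ := by infer_instance
  triv x _ v := by
    have hfib : fiber k False = ⊥ := if_neg (fun h : False => h.elim)
    obtain ⟨w, hw⟩ := v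
    apply Subtype.ext
    have hb : w ∈ (⊥ : Submodule k k) := hfib ▸ hw
    exact (Submodule.mem_bot k).mp hb
  fwd _ := 0
  bwd _ := 0
  fwd_zero _ _ := rfl
  bwd_zero _ _ := rfl

/-- The condition for a vertex `x` to be in the support of the interval representation
`M(i,j)`. -/
def SuppCond (n i j x : ℕ) : Prop := i ≤ x ∧ x ≤ j ∧ 1 ≤ x ∧ x ≤ n + 2

/-- The interval (string) representation `M(i,j)` of `Q`: one dimensional at each vertex
`x` with `i ≤ x ≤ j`, zero elsewhere, with identity maps on all arrows whose endpoints
both lie in `[i,j]`. -/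
def intervalRep (k : Type) [Field k] (n : ℕ) (ε : ℕ → Bool) (i j : ℕ) : ARep k n ε where
  V x := ↥(fiber k (SuppCond n i j x))
  acg _ := by infer_instance
  mod _ := by infer_instance
  fdim _ := by infer_instance
  triv x hx v := by
    have hP : ¬SuppCond n i j x := by simp only [SuppCond]; omega
    have hfib : fiber k (SuppCond n i j x) = ⊥ := if_neg hP
    obtain ⟨w, hw⟩ := v
    apply Subtype.ext
    have hb : w ∈ (⊥ : Submodule k k) := hfib ▸ hw
    exact (Submodule.mem_bot k).mp hb
  fwd ℓ :=
    if ε ℓ = true then fiberMap k (SuppCond n i j ℓ) (SuppCond n i j (ℓ + 1)) else 0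
  bwd ℓ :=
    if ε ℓ = true then 0 else fiberMap k (SuppCond n i j (ℓ + 1)) (SuppCond n i j ℓ)
  fwd_zero ℓ h := by simp [h]
  bwd_zero ℓ h := by simp [h]

/-- Direct sum of a list of representations. -/
def dsumList (k : Type) [Field k] (n : ℕ) (ε : ℕ → Bool) :
    List (ARep k n ε) → ARep k n ε
  | [] => zeroRep k n ε
  | M :: L => M.dsum (dsumList k n ε L)

/-- Indecomposable representations. -/
def ARep.Indec (M : ARep k n ε) : Prop :=
  ¬M.IsZero ∧ ∀ A B : ARep k n ε, M.Iso (A.dsum B) → A.IsZero ∨ B.IsZero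

/-- `A` is a direct summand of `T`. -/
def ARep.IsSummand (A T : ARep k n ε) : Prop := ∃ B : ARep k n ε, T.Iso (A.dsum B)

/-- A representation is basic when it has no repeated indecomposable direct summand. -/
def ARep.Basic (T : ARep k n ε) : Prop :=
  ∀ A : ARep k n ε, A.Indec → ¬(A.dsum A).IsSummand T

/-- A short exact sequence `0 → B → E → A → 0`. -/
structure SES (B A : ARep k n ε) where
  E : ARep k n ε
  ι : B.Hom E
  π : E.Hom A
  inj : ∀ x, Function.Injective (ι.app x)
  surj : ∀ x, Function.Surjective (π.app x)
  exct : ∀ x (v : E.V x), π.app x v = 0 ↔ ∃ u, ι.app x u = v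

/-- A short exact sequence splits. -/
def SES.Splits {B A : ARep k n ε} (σ : SES B A) : Prop :=
  ∃ r : σ.E.Hom B, ∀ x (v : B.V x), r.app x (σ.ι.app x v) = v

/-- `Ext¹(A, B) = 0` : every short exact sequence `0 → B → E → A → 0` splits. -/
def ExtZero (A B : ARep k n ε) : Prop := ∀ σ : SES B A, σ.Splits

/-- `Ext¹(A,B) ≅ k`, generated by (the class of) a short exact sequence
`0 → B → E → A → 0` with indecomposable middle term `E`: there is a non-split such
sequence `σ` with `σ.E` indecomposable such that every non-split sequence is equivalent
to a nonzero scalar multiple of `σ`. -/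
def ExtOneDimIndecMid (A B : ARep k n ε) : Prop :=
  ∃ σ : SES B A, ¬σ.Splits ∧ σ.E.Indec ∧
    ∀ τ : SES B A, ¬τ.Splits → ∃ c : k, c ≠ 0 ∧
      ∃ φ : σ.E.Hom τ.E, (∀ x, Function.Bijective (φ.app x)) ∧
        (∀ x (v : B.V x), φ.app x (σ.ι.app x v) = τ.ι.app x v) ∧
        (∀ x (v : σ.E.V x), τ.π.app x (φ.app x v) = c • σ.π.app x v)

/-- Almost rigid representations. -/
def AlmostRigid (T : ARep k n ε) : Prop :=
  T.Basic ∧ ∀ A B : ARep k n ε, A.Indec → B.Indec → A.IsSummand T → B.IsSummand T →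
    ExtZero A B ∨ ExtOneDimIndecMid A B

/-- Maximal almost rigid representations. -/
def MaxAlmostRigid (T : ARep k n ε) : Prop :=
  AlmostRigid T ∧ ∀ M : ARep k n ε, ¬M.IsZero → ¬AlmostRigid (T.dsum M)

/-- `f` is a section. -/
def ARep.Hom.IsSection {M N : ARep k n ε} (f : M.Hom N) : Prop :=
  ∃ g : N.Hom M, ∀ x (v : M.V x), g.app x (f.app x v) = v

/-- `f` is a retraction. -/
def ARep.Hom.IsRetraction {M N : ARep k n ε} (f : M.Hom N) : Prop :=
  ∃ g : N.Hom M, ∀ x (v : N.V x), f.app x (g.app x v) = v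

/-- Irreducible morphisms: `f` is neither a section nor a retraction, and in every
factorization `f = g ∘ h` either `h` is a section or `g` is a retraction. -/
def ARep.Hom.Irred {M N : ARep k n ε} (f : M.Hom N) : Prop :=
  ¬f.IsSection ∧ ¬f.IsRetraction ∧
    ∀ (Z : ARep k n ε) (h : M.Hom Z) (g : Z.Hom N),
      (∀ x (v : M.V x), f.app x v = g.app x (h.app x v)) → h.IsSection ∨ g.IsRetraction

/-- Subrepresentations : families of subspaces closed under the structure maps. -/
structure Subrep (M : ARep k n ε) where
  U : ∀ x, Submodule k (M.V x)
  fwd_mem : ∀ i, ∀ v ∈ U i, M.fwd i v ∈ U (i + 1)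
  bwd_mem : ∀ i, ∀ v ∈ U (i + 1), M.bwd i v ∈ U i

/-- The central charge `Z(M) = Σ_{x=1}^{n+2} dim_k(M_x) · (p_x − p_{x−1})`. -/
def charge (p : ℕ → ℂ) (M : ARep k n ε) : ℂ :=
  ∑ x ∈ Finset.Icc 1 (n + 2), (Module.finrank k (M.V x) : ℂ) * (p x - p (x - 1))

/-- The central charge of a subrepresentation. -/
def subCharge (p : ℕ → ℂ) {M : ARep k n ε} (L : Subrep M) : ℂ :=
  ∑ x ∈ Finset.Icc 1 (n + 2), (Module.finrank k (L.U x) : ℂ) * (p x - p (x - 1))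

/-- The representation `F(T) = ⊕_{γ(a,b) ∈ T} M(a+1, b)` attached to a collection `T` of
segments of the polygon `P(Q)`. -/
def FRep (k : Type) [Field k] (n : ℕ) (ε : ℕ → Bool) (T : Finset (ℕ × ℕ)) : ARep k n ε :=
  dsumList k n ε (T.toList.map fun e => intervalRep k n ε (e.1 + 1) e.2)

end CambrianA

namespace CambrianA


section Proofs

variable {k : Type} [Field k] {n : ℕ} {ε : ℕ → Bool}

/-! ### Chains of elements and of functionals -/

abbrev ERel (Z : ARep k n ε) (u : ∀ x, Z.V x) (x : ℕ) : Prop :=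
  (ε x = true → u (x + 1) = Z.fwd x (u x)) ∧ (ε x = false → u x = Z.bwd x (u (x + 1)))

abbrev FunRel (Z : ARep k n ε) (Φ : ∀ x, Z.V x →ₗ[k] k) (x : ℕ) : Prop :=
  (ε x = true → ∀ v, Φ x v = Φ (x + 1) (Z.fwd x v)) ∧
    (ε x = false → ∀ v, Φ (x + 1) v = Φ x (Z.bwd x v))

theorem extend_fun {A B : Type} [AddCommGroup A] [Module k A] [AddCommGroup B] [Module k B]
    (α : A →ₗ[k] B) (T : Submodule k B) (φ : A →ₗ[k] k) (h : ∀ a, α a ∈ T → φ a = 0) :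
    ∃ ψ : B →ₗ[k] k, (∀ a, φ a = ψ (α a)) ∧ ∀ t ∈ T, ψ t = 0 := by
  have h1 : φ ∈ (LinearMap.ker (T.mkQ ∘ₗ α)).dualAnnihilator := by
    rw [Submodule.mem_dualAnnihilator]
    intro a ha
    apply h
    simpa using ha
  rw [← LinearMap.range_dualMap_eq_dualAnnihilator_ker] at h1
  obtain ⟨ψ, hψ⟩ := h1
  refine ⟨ψ ∘ₗ T.mkQ, fun a => ?_, fun t ht => ?_⟩
  · rw [← hψ]; rfl
  · have : T.mkQ t = 0 := by simpa using ht
    simp only [LinearMap.comp_apply, this, map_zero]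

theorem sep_fun {A : Type} [AddCommGroup A] [Module k A] (T : Submodule k A) (u : A)
    (h : u ∉ T) : ∃ φ : A →ₗ[k] k, φ u = 1 ∧ ∀ t ∈ T, φ t = 0 := by
  obtain ⟨f, hf, hT⟩ := Submodule.exists_le_ker_of_notMem h
  refine ⟨(f u)⁻¹ • f, by simp [hf], fun t ht => ?_⟩
  have : f t = 0 := hT ht
  simp [this]

theorem right_chain (Z : ARep k n ε) (q : ℕ) (T : Submodule k (Z.V q)) (p : ℕ) (hpq : p ≤ q) :
    ∃ S : Submodule k (Z.V p),
      (∀ s ∈ S, ∃ w : ∀ x, Z.V x, w p = s ∧ w q ∈ T ∧ ∀ x, p ≤ x → x < q → ERel Z w x) ∧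
      (∀ φ : Z.V p →ₗ[k] k, (∀ s ∈ S, φ s = 0) → ∃ Φ : ∀ x, Z.V x →ₗ[k] k,
        Φ p = φ ∧ (∀ t ∈ T, Φ q t = 0) ∧ ∀ x, p ≤ x → x < q → FunRel Z Φ x) := by
  obtain ⟨m, hm⟩ : ∃ m, m = q - p := ⟨_, rfl⟩
  induction m generalizing p with
  | zero =>
    obtain rfl : p = q := by omega
    refine ⟨T, fun s hs => ⟨Function.update 0 p s, by simp, by simpa using hs, ?_⟩,
      fun φ hφ => ⟨Function.update 0 p φ, by simp, by simpa using hφ, ?_⟩⟩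
    · intro x h1 h2; omega
    · intro x h1 h2; omega
  | succ m ih =>
    obtain ⟨S, hS1, hS2⟩ := ih (p + 1) (by omega) (by omega)
    have key : ∃ S0 : Submodule k (Z.V p),
        (∀ s ∈ S0, ∃ s' ∈ S, (ε p = true → s' = Z.fwd p s) ∧ (ε p = false → s = Z.bwd p s')) ∧
        (∀ φ : Z.V p →ₗ[k] k, (∀ s ∈ S0, φ s = 0) → ∃ ψ : Z.V (p + 1) →ₗ[k] k,
          (∀ s ∈ S, ψ s = 0) ∧ (ε p = true → ∀ v, φ v = ψ (Z.fwd p v)) ∧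
            (ε p = false → ∀ v, ψ v = φ (Z.bwd p v))) := by
      cases hε : ε p with
      | true =>
        refine ⟨S.comap (Z.fwd p), fun s hs => ⟨Z.fwd p s, hs, by simp, by simp⟩,
          fun φ hφ => ?_⟩
        obtain ⟨ψ, h1, h2⟩ := extend_fun (Z.fwd p) S φ hφ
        exact ⟨ψ, h2, fun _ => h1, by simp⟩
      | false =>
        refine ⟨S.map (Z.bwd p), ?_, fun φ hφ => ⟨φ ∘ₗ Z.bwd p, ?_, by simp, by simp⟩⟩
        · rintro _ ⟨s', hs', rfl⟩
          exact ⟨s', hs', by simp, by simp⟩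
        · intro s hs
          exact hφ _ ⟨s, hs, rfl⟩
    obtain ⟨S0, h1, h2⟩ := key
    refine ⟨S0, fun s hs => ?_, fun φ hφ => ?_⟩
    · obtain ⟨s', hs', ha, hb⟩ := h1 s hs
      obtain ⟨w, hw1, hw2, hw3⟩ := hS1 s' hs'
      refine ⟨Function.update w p s, by simp, ?_, fun x hx1 hx2 => ?_⟩
      · rwa [Function.update_of_ne (by omega)]
      · rcases Nat.eq_or_lt_of_le hx1 with rfl | hlt
        · simp only [ERel, Function.update_self]
          rw [Function.update_of_ne (by omega), hw1]
          exact ⟨ha, hb⟩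
        · simp only [ERel]
          rw [Function.update_of_ne (by omega), Function.update_of_ne (by omega)]
          exact hw3 x (by omega) hx2
    · obtain ⟨ψ, hψ, ha, hb⟩ := h2 φ hφ
      obtain ⟨w, hw1, hw2, hw3⟩ := hS2 ψ hψ
      refine ⟨Function.update w p φ, by simp, ?_, fun x hx1 hx2 => ?_⟩
      · rwa [Function.update_of_ne (by omega)]
      · rcases Nat.eq_or_lt_of_le hx1 with rfl | hlt
        · simp only [FunRel, Function.update_self]
          rw [Function.update_of_ne (by omega), hw1]
          exact ⟨ha, hb⟩
        · simp only [FunRel]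
          rw [Function.update_of_ne (by omega), Function.update_of_ne (by omega)]
          exact hw3 x (by omega) hx2

theorem left_chain (Z : ARep k n ε) (q : ℕ) (T : Submodule k (Z.V q)) (p : ℕ) (hpq : q ≤ p) :
    ∃ S : Submodule k (Z.V p),
      (∀ s ∈ S, ∃ w : ∀ x, Z.V x, w p = s ∧ w q ∈ T ∧ ∀ x, q ≤ x → x < p → ERel Z w x) ∧
      (∀ φ : Z.V p →ₗ[k] k, (∀ s ∈ S, φ s = 0) → ∃ Φ : ∀ x, Z.V x →ₗ[k] k,
        Φ p = φ ∧ (∀ t ∈ T, Φ q t = 0) ∧ ∀ x, q ≤ x → x < p → FunRel Z Φ x) := by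
  induction p, hpq using Nat.le_induction with
  | base =>
    refine ⟨T, fun s hs => ⟨Function.update 0 q s, by simp, by simpa using hs, ?_⟩,
      fun φ hφ => ⟨Function.update 0 q φ, by simp, by simpa using hφ, ?_⟩⟩
    · intro x h1 h2; omega
    · intro x h1 h2; omega
  | succ p hqp ih =>
    obtain ⟨S, hS1, hS2⟩ := ih
    have key : ∃ S0 : Submodule k (Z.V (p + 1)),
        (∀ s ∈ S0, ∃ s' ∈ S, (ε p = true → s = Z.fwd p s') ∧ (ε p = false → s' = Z.bwd p s)) ∧
        (∀ φ : Z.V (p + 1) →ₗ[k] k, (∀ s ∈ S0, φ s = 0) → ∃ ψ : Z.V p →ₗ[k] k,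
          (∀ s ∈ S, ψ s = 0) ∧ (ε p = true → ∀ v, ψ v = φ (Z.fwd p v)) ∧
            (ε p = false → ∀ v, φ v = ψ (Z.bwd p v))) := by
      cases hε : ε p with
      | false =>
        refine ⟨S.comap (Z.bwd p), fun s hs => ⟨Z.bwd p s, hs, by simp, by simp⟩,
          fun φ hφ => ?_⟩
        obtain ⟨ψ, h1, h2⟩ := extend_fun (Z.bwd p) S φ hφ
        exact ⟨ψ, h2, by simp, fun _ => h1⟩
      | true =>
        refine ⟨S.map (Z.fwd p), ?_, fun φ hφ => ⟨φ ∘ₗ Z.fwd p, ?_, by simp, by simp⟩⟩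
        · rintro _ ⟨s', hs', rfl⟩
          exact ⟨s', hs', by simp, by simp⟩
        · intro s hs
          exact hφ _ ⟨s, hs, rfl⟩
    obtain ⟨S0, h1, h2⟩ := key
    refine ⟨S0, fun s hs => ?_, fun φ hφ => ?_⟩
    · obtain ⟨s', hs', ha, hb⟩ := h1 s hs
      obtain ⟨w, hw1, hw2, hw3⟩ := hS1 s' hs'
      refine ⟨Function.update w (p + 1) s, by simp, ?_, fun x hx1 hx2 => ?_⟩
      · rwa [Function.update_of_ne (by omega)]
      · rcases Nat.eq_or_lt_of_le (Nat.lt_succ_iff.mp hx2) with rfl | hlt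
        · simp only [ERel, Function.update_self]
          rw [Function.update_of_ne (by omega), hw1]
          exact ⟨ha, hb⟩
        · simp only [ERel]
          rw [Function.update_of_ne (by omega), Function.update_of_ne (by omega)]
          exact hw3 x hx1 hlt
    · obtain ⟨ψ, hψ, ha, hb⟩ := h2 φ hφ
      obtain ⟨w, hw1, hw2, hw3⟩ := hS2 ψ hψ
      refine ⟨Function.update w (p + 1) φ, by simp, ?_, fun x hx1 hx2 => ?_⟩
      · rwa [Function.update_of_ne (by omega)]
      · rcases Nat.eq_or_lt_of_le (Nat.lt_succ_iff.mp hx2) with rfl | hlt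
        · simp only [FunRel, Function.update_self]
          rw [Function.update_of_ne (by omega), hw1]
          exact ⟨ha, hb⟩
        · simp only [FunRel]
          rw [Function.update_of_ne (by omega), Function.update_of_ne (by omega)]
          exact hw3 x hx1 hlt

/-! ### Morphisms from and to interval representations -/

def cof (k : Type) [Field k] (n : ℕ) (ε : ℕ → Bool) (a b x : ℕ) :
    (intervalRep k n ε a b).V x →ₗ[k] k :=
  (fiber k (SuppCond n a b x)).subtype

theorem cof_inj {a b x : ℕ} {v w : (intervalRep k n ε a b).V x}
    (h : cof k n ε a b x v = cof k n ε a b x w) : v = w := Subtype.ext h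

theorem cof_surj {a b x : ℕ} (hS : SuppCond n a b x) (c : k) :
    ∃ v : (intervalRep k n ε a b).V x, cof k n ε a b x v = c := by
  have hf : fiber k (SuppCond n a b x) = ⊤ := if_pos hS
  exact ⟨⟨c, by rw [hf]; trivial⟩, rfl⟩

theorem cof_zero {a b x : ℕ} (hS : ¬ SuppCond n a b x) (v : (intervalRep k n ε a b).V x) :
    cof k n ε a b x v = 0 := by
  have hf : fiber k (SuppCond n a b x) = ⊥ := if_neg hS
  obtain ⟨w, hw⟩ := v
  have hb : w ∈ (⊥ : Submodule k k) := hf ▸ hw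
  exact (Submodule.mem_bot k).mp hb

def incF (k : Type) [Field k] (P : Prop) : k →ₗ[k] fiber k P :=
  if h : P then
    LinearMap.codRestrict (fiber k P) LinearMap.id (fun c => by
      have hf : fiber k P = ⊤ := if_pos h
      rw [hf]; trivial)
  else 0

theorem incF_coe (P : Prop) (c : k) : ((incF k P c : fiber k P) : k) = if P then c else 0 := by
  unfold incF
  split_ifs <;> rfl

def inc (k : Type) [Field k] (n : ℕ) (ε : ℕ → Bool) (a b x : ℕ) :
    k →ₗ[k] (intervalRep k n ε a b).V x := incF k (SuppCond n a b x)

theorem cof_inc (a b x : ℕ) (c : k) :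
    cof k n ε a b x (inc k n ε a b x c) = if SuppCond n a b x then c else 0 :=
  incF_coe _ _

theorem inc_cof (a b x : ℕ) (v : (intervalRep k n ε a b).V x) :
    inc k n ε a b x (cof k n ε a b x v) = v := by
  apply cof_inj
  rw [cof_inc]
  split_ifs with h
  · rfl
  · rw [cof_zero h]

theorem fiberMap_coe (P Q : Prop) (v : fiber k P) :
    ((fiberMap k P Q v : fiber k Q) : k) = if P ∧ Q then (v : k) else 0 := by
  unfold fiberMap
  split_ifs <;> rfl

theorem cof_fwd {a b x : ℕ} (v : (intervalRep k n ε a b).V x) :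
    cof k n ε a b (x + 1) ((intervalRep k n ε a b).fwd x v) =
      if ε x = true ∧ SuppCond n a b x ∧ SuppCond n a b (x + 1) then cof k n ε a b x v else 0 := by
  by_cases h : ε x = true
  · have : (intervalRep k n ε a b).fwd x =
        fiberMap k (SuppCond n a b x) (SuppCond n a b (x + 1)) := if_pos h
    rw [this]
    refine (fiberMap_coe _ _ _).trans ?_
    simp only [h, true_and]
    rfl
  · rw [(intervalRep k n ε a b).fwd_zero x (by simpa using h)]
    simp [h]

theorem cof_bwd {a b x : ℕ} (v : (intervalRep k n ε a b).V (x + 1)) :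
    cof k n ε a b x ((intervalRep k n ε a b).bwd x v) =
      if ε x = false ∧ SuppCond n a b x ∧ SuppCond n a b (x + 1)
        then cof k n ε a b (x + 1) v else 0 := by
  by_cases h : ε x = true
  · rw [(intervalRep k n ε a b).bwd_zero x h]
    simp [h]
  · have : (intervalRep k n ε a b).bwd x =
        fiberMap k (SuppCond n a b (x + 1)) (SuppCond n a b x) := if_neg h
    rw [this]
    refine (fiberMap_coe _ _ _).trans ?_
    have h' : ε x = false := by simpa using h
    simp only [h', true_and]
    by_cases h1 : SuppCond n a b x
    · by_cases h2 : SuppCond n a b (x + 1)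
      · rw [if_pos ⟨h2, h1⟩, if_pos ⟨h1, h2⟩]; rfl
      · rw [if_neg (fun h => h2 h.1), if_neg (fun h => h2 h.2)]
    · rw [if_neg (fun h => h1 h.2), if_neg (fun h => h1 h.1)]

def HElt (Z : ARep k n ε) (i j : ℕ) (u : ∀ x, Z.V x) : Prop :=
  (∀ x, ¬(i < x ∧ x ≤ j) → u x = 0) ∧
  (∀ x, i < x → x ≤ j → ε x = true → u (x + 1) = Z.fwd x (u x)) ∧
  (∀ x, i < x + 1 → x + 1 ≤ j → ε x = false → u x = Z.bwd x (u (x + 1)))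

def HFun (Z : ARep k n ε) (i j : ℕ) (Φ : ∀ x, Z.V x →ₗ[k] k) : Prop :=
  (∀ x, ¬(i < x ∧ x ≤ j) → Φ x = 0) ∧
  (∀ x, i < x + 1 → x + 1 ≤ j → ε x = true → ∀ v, Φ x v = Φ (x + 1) (Z.fwd x v)) ∧
  (∀ x, i < x → x ≤ j → ε x = false → ∀ v, Φ (x + 1) v = Φ x (Z.bwd x v))

theorem supp_iff {i j x : ℕ} (hj : j ≤ n + 2) : SuppCond n (i + 1) j x ↔ (i < x ∧ x ≤ j) := by
  unfold SuppCond; omega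

theorem hom_of_elt {Z : ARep k n ε} {i j : ℕ} {u : ∀ x, Z.V x} (hj : j ≤ n + 2)
    (hu : HElt Z i j u) : ∃ h : (intervalRep k n ε (i + 1) j).Hom Z,
      ∀ x v, h.app x v = cof k n ε (i + 1) j x v • u x := by
  refine ⟨⟨fun x => (cof k n ε (i + 1) j x).smulRight (u x), fun x v => ?_, fun x v => ?_⟩,
    fun x v => rfl⟩
  · simp only [LinearMap.smulRight_apply, map_smul]
    rw [cof_fwd]
    simp only [supp_iff hj]
    by_cases hx : i < x ∧ x ≤ j
    · cases hε : ε x with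
      | true =>
        rw [← hu.2.1 x hx.1 hx.2 hε]
        by_cases hx' : i < x + 1 ∧ x + 1 ≤ j
        · simp [hx, hx']
        · rw [hu.1 _ hx']; simp
      | false => simp [Z.fwd_zero x hε]
    · rw [cof_zero (by rwa [supp_iff hj])]
      simp [hx]
  · simp only [LinearMap.smulRight_apply, map_smul]
    rw [cof_bwd]
    simp only [supp_iff hj]
    by_cases hx : i < x + 1 ∧ x + 1 ≤ j
    · cases hε : ε x with
      | false =>
        rw [← hu.2.2 x hx.1 hx.2 hε]
        by_cases hx' : i < x ∧ x ≤ j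
        · simp [hx, hx']
        · rw [hu.1 _ hx']; simp
      | true => simp [Z.bwd_zero x hε]
    · rw [cof_zero (by rwa [supp_iff hj])]
      simp

theorem elt_of_hom {Z : ARep k n ε} {i j : ℕ} (hj : j ≤ n + 2)
    (h : (intervalRep k n ε (i + 1) j).Hom Z) : ∃ u : ∀ x, Z.V x, HElt Z i j u ∧
      ∀ x v, h.app x v = cof k n ε (i + 1) j x v • u x := by
  refine ⟨fun x => h.app x (inc k n ε (i + 1) j x 1), ⟨fun x hx => ?_, fun x h1 h2 hε => ?_,
    fun x h1 h2 hε => ?_⟩, fun x v => ?_⟩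
  · have : inc k n ε (i + 1) j x 1 = 0 := by
      apply cof_inj
      rw [cof_zero (by rwa [supp_iff hj]), map_zero]
    simp [this]
  · rw [← h.comm_fwd]
    refine congrArg _ (cof_inj ?_)
    rw [cof_fwd, cof_inc, cof_inc]
    simp only [supp_iff hj]
    simp [h1, h2, hε]
  · rw [← h.comm_bwd]
    refine congrArg _ (cof_inj ?_)
    rw [cof_bwd, cof_inc, cof_inc]
    simp only [supp_iff hj]
    simp [h1, h2, hε]
  · rw [← map_smul, ← map_smul]
    simp only [smul_eq_mul, mul_one]
    rw [inc_cof]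

theorem hom_of_fun {Z : ARep k n ε} {i j : ℕ} {Φ : ∀ x, Z.V x →ₗ[k] k} (hj : j ≤ n + 2)
    (hu : HFun Z i j Φ) : ∃ h : Z.Hom (intervalRep k n ε (i + 1) j),
      ∀ x v, cof k n ε (i + 1) j x (h.app x v) = Φ x v := by
  have key : ∀ x v, cof k n ε (i + 1) j x ((inc k n ε (i + 1) j x ∘ₗ Φ x) v) = Φ x v := by
    intro x v
    rw [LinearMap.comp_apply, cof_inc]
    split_ifs with h
    · rfl
    · rw [hu.1 x (by rwa [supp_iff hj] at h)]; rfl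
  refine ⟨⟨fun x => inc k n ε (i + 1) j x ∘ₗ Φ x, fun x v => ?_, fun x v => ?_⟩, key⟩
  · apply cof_inj
    rw [cof_fwd, key, key]
    simp only [supp_iff hj]
    cases hε : ε x with
    | false => simp [Z.fwd_zero x hε]
    | true =>
      by_cases hx : i < x + 1 ∧ x + 1 ≤ j
      · rw [← hu.2.1 x hx.1 hx.2 hε]
        by_cases hx' : i < x ∧ x ≤ j
        · simp [hx, hx']
        · rw [hu.1 _ hx']; simp
      · rw [hu.1 _ hx, if_neg (fun h => hx h.2.2)]; simp
  · apply cof_inj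
    rw [cof_bwd, key, key]
    simp only [supp_iff hj]
    cases hε : ε x with
    | true => simp [Z.bwd_zero x hε]
    | false =>
      by_cases hx : i < x ∧ x ≤ j
      · rw [← hu.2.2 x hx.1 hx.2 hε]
        by_cases hx' : i < x + 1 ∧ x + 1 ≤ j
        · simp [hx, hx']
        · rw [hu.1 _ hx']; simp
      · rw [hu.1 _ hx]; simp [hx]

theorem fun_of_hom {Z : ARep k n ε} {i j : ℕ} (hj : j ≤ n + 2)
    (h : Z.Hom (intervalRep k n ε (i + 1) j)) : ∃ Φ : ∀ x, Z.V x →ₗ[k] k, HFun Z i j Φ ∧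
      ∀ x v, cof k n ε (i + 1) j x (h.app x v) = Φ x v := by
  refine ⟨fun x => cof k n ε (i + 1) j x ∘ₗ h.app x, ⟨fun x hx => ?_, fun x h1 h2 hε v => ?_,
    fun x h1 h2 hε v => ?_⟩, fun x v => rfl⟩
  · ext v
    exact cof_zero (by rwa [supp_iff hj]) _
  · simp only [LinearMap.comp_apply]
    rw [h.comm_fwd, cof_fwd]
    simp only [supp_iff hj]
    by_cases hx : i < x ∧ x ≤ j
    · simp [hx, hε, h1, h2]
    · rw [cof_zero (by rwa [supp_iff hj])]; simp
  · simp only [LinearMap.comp_apply]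
    rw [h.comm_bwd, cof_bwd]
    simp only [supp_iff hj]
    by_cases hx : i < x + 1 ∧ x + 1 ≤ j
    · simp [hx, hε, h1, h2]
    · rw [cof_zero (by rwa [supp_iff hj])]; simp

/-- The pairing of an element family with a functional family is constant on the
intersection of the supports. -/
theorem pair_const {Z : ARep k n ε} {i j i' j' : ℕ} {u : ∀ x, Z.V x}
    {Φ : ∀ x, Z.V x →ₗ[k] k} (hu : HElt Z i j u) (hΦ : HFun Z i' j' Φ) {x y : ℕ}
    (hx : i < x ∧ x ≤ j ∧ i' < x ∧ x ≤ j') (hy : i < y ∧ y ≤ j ∧ i' < y ∧ y ≤ j') :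
    Φ x (u x) = Φ y (u y) := by
  have key : ∀ m x, i < x → i' < x → x + m ≤ j → x + m ≤ j' →
      Φ x (u x) = Φ (x + m) (u (x + m)) := by
    intro m
    induction m with
    | zero => intros; rfl
    | succ m ih =>
      intro x a b c d
      rw [ih x a b (by omega) (by omega), ← Nat.add_assoc]
      cases hε : ε (x + m) with
      | true =>
        rw [hΦ.2.1 (x + m) (by omega) (by omega) hε, hu.2.1 (x + m) (by omega) (by omega) hε]
      | false =>
        rw [hΦ.2.2 (x + m) (by omega) (by omega) hε, hu.2.2 (x + m) (by omega) (by omega) hε]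
  rcases le_total x y with h | h
  · obtain ⟨m, rfl⟩ := Nat.exists_eq_add_of_le h
    exact key m x hx.1 hx.2.2.1 hy.2.1 hy.2.2.2
  · obtain ⟨m, rfl⟩ := Nat.exists_eq_add_of_le h
    exact (key m y hy.1 hy.2.2.1 hx.2.1 hx.2.2.2).symm

theorem elt_of_chain {Z : ARep k n ε} {i j : ℕ} {w : ∀ x, Z.V x}
    (hc : ∀ x, i + 1 ≤ x → x < j → ERel Z w x)
    (hl : ε i = false → Z.bwd i (w (i + 1)) = 0) (hr : ε j = true → Z.fwd j (w j) = 0) :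
    HElt Z i j (fun x => if i < x ∧ x ≤ j then w x else 0) := by
  refine ⟨fun x hx => if_neg hx, fun x h1 h2 hε => ?_, fun x h1 h2 hε => ?_⟩
  · simp only [if_pos (And.intro h1 h2)]
    rcases Nat.eq_or_lt_of_le h2 with rfl | hlt
    · rw [if_neg (by omega), hr hε]
    · rw [if_pos (by omega)]
      exact (hc x h1 hlt).1 hε
  · simp only [if_pos (And.intro h1 h2)]
    rcases Nat.eq_or_lt_of_le (Nat.lt_succ_iff.mp h1) with rfl | hlt
    · rw [if_neg (by omega), hl hε]
    · rw [if_pos (by omega)]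
      exact (hc x hlt h2).2 hε

theorem fun_of_chain {Z : ARep k n ε} {i j : ℕ} {Φ : ∀ x, Z.V x →ₗ[k] k}
    (hc : ∀ x, i + 1 ≤ x → x < j → FunRel Z Φ x)
    (hl : ε i = true → ∀ v, Φ (i + 1) (Z.fwd i v) = 0)
    (hr : ε j = false → ∀ v, Φ j (Z.bwd j v) = 0) :
    HFun Z i j (fun x => if i < x ∧ x ≤ j then Φ x else 0) := by
  refine ⟨fun x hx => if_neg hx, fun x h1 h2 hε v => ?_, fun x h1 h2 hε v => ?_⟩
  · simp only [if_pos (And.intro h1 h2)]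
    rcases Nat.eq_or_lt_of_le (Nat.lt_succ_iff.mp h1) with rfl | hlt
    · rw [if_neg (by omega), hl hε]; rfl
    · rw [if_pos (by omega)]
      exact (hc x hlt h2).1 hε v
  · simp only [if_pos (And.intro h1 h2)]
    rcases Nat.eq_or_lt_of_le h2 with rfl | hlt
    · rw [if_neg (by omega), hr hε]; rfl
    · rw [if_pos (by omega)]
      exact (hc x h1 hlt).2 hε v

theorem HElt.chain {Z : ARep k n ε} {i j : ℕ} {u : ∀ x, Z.V x} (hu : HElt Z i j u) (x : ℕ)
    (h1 : i + 1 ≤ x) (h2 : x < j) : ERel Z u x :=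
  ⟨hu.2.1 x h1 h2.le, hu.2.2 x (by omega) h2⟩

theorem HFun.chain {Z : ARep k n ε} {i j : ℕ} {u : ∀ x, Z.V x →ₗ[k] k} (hu : HFun Z i j u)
    (x : ℕ) (h1 : i + 1 ≤ x) (h2 : x < j) : FunRel Z u x :=
  ⟨hu.2.1 x (by omega) h2, hu.2.2 x h1 h2.le⟩

theorem ERel.sub {Z : ARep k n ε} {u w : ∀ x, Z.V x} {x : ℕ} (h1 : ERel Z u x)
    (h2 : ERel Z w x) : ERel Z (fun x => u x - w x) x := by
  refine ⟨fun h => ?_, fun h => ?_⟩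
  · simp only [map_sub]; rw [h1.1 h, h2.1 h]
  · simp only [map_sub]; rw [h1.2 h, h2.2 h]

theorem FunRel.sub {Z : ARep k n ε} {u w : ∀ x, Z.V x →ₗ[k] k} {x : ℕ} (h1 : FunRel Z u x)
    (h2 : FunRel Z w x) : FunRel Z (fun x => u x - w x) x := by
  refine ⟨fun h v => ?_, fun h v => ?_⟩
  · simp only [LinearMap.sub_apply]; rw [h1.1 h, h2.1 h]
  · simp only [LinearMap.sub_apply]; rw [h1.2 h, h2.2 h]

/-- left endpoint, epimorphism -/
theorem case_LE {Z : ARep k n ε} {i j i' : ℕ} {u : ∀ x, Z.V x} {G : ∀ x, Z.V x →ₗ[k] k}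
    (hi : i < i') (hij : i' < j) (hεi : i = 0 ∨ ε i = false) (hεi' : ε i' = false)
    (hmid : ∀ x, i < x → x < i' → ε x = true) (hu : HElt Z i j u) (hG : HFun Z i' j G)
    (hp : G j (u j) = 1) :
    (∃ Φ, HFun Z i j Φ ∧ Φ (i + 1) (u (i + 1)) = 1) ∨ (∃ s, HElt Z i' j s ∧ G j (s j) = 1) := by
  obtain ⟨S, hS1, hS2⟩ := right_chain Z j
    (if ε j = true then ⊥ else LinearMap.range (Z.bwd j)) (i + 1) (by omega)
  by_cases hm : u (i + 1) ∈ S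
  · right
    obtain ⟨w, hw1, hw2, hw3⟩ := hS1 _ hm
    have heq : ∀ x, i + 1 ≤ x → x ≤ i' → w x = u x := by
      intro x hx
      induction x, hx using Nat.le_induction with
      | base => intro _; exact hw1
      | succ x hx ih =>
        intro hx'
        have hε := hmid x (by omega) (by omega)
        rw [(hw3 x hx (by omega)).1 hε, (hu.chain x hx (by omega)).1 hε, ih (by omega)]
    refine ⟨_, elt_of_chain (w := fun x => u x - w x)
      (fun x h1 h2 => (hu.chain x (by omega) h2).sub (hw3 x (by omega) h2)) ?_ ?_, ?_⟩
    · intro _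
      rw [map_sub, ← (hu.chain i' (by omega) (by omega)).2 hεi',
        ← (hw3 i' (by omega) (by omega)).2 hεi', heq i' (by omega) le_rfl, sub_self]
    · intro hε
      rw [if_pos hε] at hw2
      rw [(Submodule.mem_bot k).1 hw2, sub_zero, ← hu.2.1 j (by omega) le_rfl hε]
      exact hu.1 _ (by omega)
    · rw [if_pos (by omega), map_sub, hp]
      have : G j (w j) = 0 := by
        cases hε : ε j with
        | true =>
          rw [if_pos hε] at hw2
          rw [(Submodule.mem_bot k).1 hw2, map_zero]
        | false =>
          rw [if_neg (by simp [hε])] at hw2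
          obtain ⟨y, hy⟩ := hw2
          rw [← hy, ← hG.2.2 j (by omega) le_rfl hε, hG.1 _ (by omega)]; rfl
      rw [this, sub_zero]
  · left
    obtain ⟨φ, hφ1, hφ2⟩ := sep_fun S _ hm
    obtain ⟨Φ, h1, h2, h3⟩ := hS2 φ hφ2
    refine ⟨_, fun_of_chain h3 ?_ ?_, ?_⟩
    · intro hε v
      rcases hεi with rfl | h
      · rw [Z.triv 0 (Or.inl rfl) v]; simp
      · simp [h] at hε
    · intro hε v
      exact h2 _ (by rw [if_neg (by simp [hε])]; exact ⟨v, rfl⟩)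
    · rw [if_pos (by omega), h1, hφ1]

/-- left endpoint, monomorphism -/
theorem case_LM {Z : ARep k n ε} {i j i' : ℕ} {u : ∀ x, Z.V x} {G : ∀ x, Z.V x →ₗ[k] k}
    (hi : i' < i) (hij : i < j) (hεi : ε i = true) (hεi' : i' = 0 ∨ ε i' = true)
    (hmid : ∀ x, i' < x → x < i → ε x = false) (hu : HElt Z i j u) (hG : HFun Z i' j G)
    (hp : G j (u j) = 1) :
    (∃ Φ, HFun Z i j Φ ∧ Φ j (u j) = 1) ∨
      (∃ s, HElt Z i' j s ∧ G (i' + 1) (s (i' + 1)) = 1) := by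
  obtain ⟨S, hS1, hS2⟩ := right_chain Z j
    (if ε j = true then LinearMap.ker (Z.fwd j) else ⊤) (i' + 1) (by omega)
  by_cases hm : ∀ s ∈ S, G (i' + 1) s = 0
  · left
    obtain ⟨w, hw1, hw2, hw3⟩ := hS2 _ hm
    have heq : ∀ x, i' + 1 ≤ x → x ≤ i → w x = G x := by
      intro x hx
      induction x, hx using Nat.le_induction with
      | base => intro _; exact hw1
      | succ x hx ih =>
        intro hx'
        have hε := hmid x (by omega) (by omega)
        ext v
        rw [(hw3 x hx (by omega)).2 hε, (hG.chain x hx (by omega)).2 hε, ih (by omega)]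
    refine ⟨_, fun_of_chain (Φ := fun x => G x - w x)
      (fun x h1 h2 => (hG.chain x (by omega) h2).sub (hw3 x (by omega) h2)) ?_ ?_, ?_⟩
    · intro _ v
      rw [LinearMap.sub_apply, ← (hG.chain i (by omega) (by omega)).1 hεi,
        ← (hw3 i (by omega) (by omega)).1 hεi, heq i (by omega) le_rfl, sub_self]
    · intro hε v
      rw [LinearMap.sub_apply, ← hG.2.2 j (by omega) le_rfl hε, hG.1 _ (by omega),
        hw2 _ (by rw [if_neg (by simp [hε])]; trivial)]
      simp
    · rw [if_pos (by omega), LinearMap.sub_apply, hp]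
      have : w j (u j) = 0 := by
        apply hw2
        split_ifs with hε
        · rw [LinearMap.mem_ker, ← hu.2.1 j (by omega) le_rfl hε]
          exact hu.1 _ (by omega)
        · trivial
      rw [this, sub_zero]
  · right
    push Not at hm
    obtain ⟨s, hs, hs0⟩ := hm
    obtain ⟨w, h1, h2, h3⟩ := hS1 ((G (i' + 1) s)⁻¹ • s) (S.smul_mem _ hs)
    refine ⟨_, elt_of_chain h3 ?_ ?_, ?_⟩
    · intro hε
      rcases hεi' with rfl | h
      · exact Z.triv 0 (Or.inl rfl) _
      · simp [h] at hε
    · intro hε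
      rwa [if_pos hε] at h2
    · rw [if_pos (by omega), h1]
      simp [hs0]

/-- right endpoint, epimorphism -/
theorem case_RE {Z : ARep k n ε} {i j j' : ℕ} {u : ∀ x, Z.V x} {G : ∀ x, Z.V x →ₗ[k] k}
    (hj : j' < j) (hij : i < j') (hεj : j = n + 2 ∨ ε j = true) (hεj' : ε j' = true)
    (hmid : ∀ x, j' < x → x < j → ε x = false) (hu : HElt Z i j u) (hG : HFun Z i j' G)
    (hp : G (i + 1) (u (i + 1)) = 1) :
    (∃ Φ, HFun Z i j Φ ∧ Φ j (u j) = 1) ∨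
      (∃ s, HElt Z i j' s ∧ G (i + 1) (s (i + 1)) = 1) := by
  obtain ⟨S, hS1, hS2⟩ := left_chain Z (i + 1)
    (if ε i = true then LinearMap.range (Z.fwd i) else ⊥) j (by omega)
  by_cases hm : u j ∈ S
  · right
    obtain ⟨w, hw1, hw2, hw3⟩ := hS1 _ hm
    have heq : ∀ m x, x + m = j → j' + 1 ≤ x → w x = u x := by
      intro m
      induction m with
      | zero => intro x hx _; obtain rfl : x = j := hx; exact hw1
      | succ m ih =>
        intro x hx hx'
        have hε := hmid x (by omega) (by omega)
        rw [(hw3 x (by omega) (by omega)).2 hε, (hu.chain x (by omega) (by omega)).2 hε,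
          ih (x + 1) (by omega) (by omega)]
    refine ⟨_, elt_of_chain (w := fun x => u x - w x)
      (fun x h1 h2 => (hu.chain x h1 (by omega)).sub (hw3 x h1 (by omega))) ?_ ?_, ?_⟩
    · intro hε
      rw [if_neg (by simp [hε])] at hw2
      rw [(Submodule.mem_bot k).1 hw2, sub_zero, ← hu.2.2 i (by omega) (by omega) hε]
      exact hu.1 _ (by omega)
    · intro _
      rw [map_sub, ← (hu.chain j' (by omega) (by omega)).1 hεj',
        ← (hw3 j' (by omega) (by omega)).1 hεj', heq (j - (j' + 1)) (j' + 1) (by omega) le_rfl,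
        sub_self]
    · rw [if_pos (by omega), map_sub, hp]
      have : G (i + 1) (w (i + 1)) = 0 := by
        cases hε : ε i with
        | false =>
          rw [if_neg (by simp [hε])] at hw2
          rw [(Submodule.mem_bot k).1 hw2, map_zero]
        | true =>
          rw [if_pos hε] at hw2
          obtain ⟨y, hy⟩ := hw2
          rw [← hy, ← hG.2.1 i (by omega) (by omega) hε, hG.1 _ (by omega)]; rfl
      rw [this, sub_zero]
  · left
    obtain ⟨φ, hφ1, hφ2⟩ := sep_fun S _ hm
    obtain ⟨Φ, h1, h2, h3⟩ := hS2 φ hφ2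
    refine ⟨_, fun_of_chain h3 ?_ ?_, ?_⟩
    · intro hε v
      exact h2 _ (by rw [if_pos hε]; exact ⟨v, rfl⟩)
    · intro hε v
      rcases hεj with rfl | h
      · rw [Z.triv (n + 2 + 1) (Or.inr (by omega)) v]; simp
      · simp [h] at hε
    · rw [if_pos (by omega), h1, hφ1]

/-- right endpoint, monomorphism -/
theorem case_RM {Z : ARep k n ε} {i j j' : ℕ} {u : ∀ x, Z.V x} {G : ∀ x, Z.V x →ₗ[k] k}
    (hj : j < j') (hij : i < j) (hεj : ε j = false) (hεj' : j' = n + 2 ∨ ε j' = false)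
    (hmid : ∀ x, j < x → x < j' → ε x = true) (hu : HElt Z i j u) (hG : HFun Z i j' G)
    (hp : G (i + 1) (u (i + 1)) = 1) :
    (∃ Φ, HFun Z i j Φ ∧ Φ (i + 1) (u (i + 1)) = 1) ∨
      (∃ s, HElt Z i j' s ∧ G j' (s j') = 1) := by
  obtain ⟨S, hS1, hS2⟩ := left_chain Z (i + 1)
    (if ε i = true then ⊤ else LinearMap.ker (Z.bwd i)) j' (by omega)
  by_cases hm : ∀ s ∈ S, G j' s = 0
  · left
    obtain ⟨w, hw1, hw2, hw3⟩ := hS2 _ hm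
    have heq : ∀ m x, x + m = j' → j + 1 ≤ x → w x = G x := by
      intro m
      induction m with
      | zero => intro x hx _; obtain rfl : x = j' := hx; exact hw1
      | succ m ih =>
        intro x hx hx'
        have hε := hmid x (by omega) (by omega)
        ext v
        rw [(hw3 x (by omega) (by omega)).1 hε, (hG.chain x (by omega) (by omega)).1 hε,
          ih (x + 1) (by omega) (by omega)]
    refine ⟨_, fun_of_chain (Φ := fun x => G x - w x)
      (fun x h1 h2 => (hG.chain x h1 (by omega)).sub (hw3 x h1 (by omega))) ?_ ?_, ?_⟩
    · intro hε v
      rw [LinearMap.sub_apply, ← hG.2.1 i (by omega) (by omega) hε, hG.1 _ (by omega),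
        hw2 _ (by rw [if_pos hε]; trivial)]
      simp
    · intro _ v
      rw [LinearMap.sub_apply, ← (hG.chain j (by omega) (by omega)).2 hεj,
        ← (hw3 j (by omega) (by omega)).2 hεj, heq (j' - (j + 1)) (j + 1) (by omega) le_rfl,
        sub_self]
    · rw [if_pos (by omega), LinearMap.sub_apply, hp]
      have : w (i + 1) (u (i + 1)) = 0 := by
        apply hw2
        split_ifs with hε
        · trivial
        · rw [LinearMap.mem_ker, ← hu.2.2 i (by omega) (by omega) (by simpa using hε)]
          exact hu.1 _ (by omega)
      rw [this, sub_zero]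
  · right
    push Not at hm
    obtain ⟨s, hs, hs0⟩ := hm
    obtain ⟨w, h1, h2, h3⟩ := hS1 ((G j' s)⁻¹ • s) (S.smul_mem _ hs)
    refine ⟨_, elt_of_chain h3 ?_ ?_, ?_⟩
    · intro hε
      rwa [if_neg (by simp [hε])] at h2
    · intro hε
      rcases hεj' with rfl | h
      · exact Z.triv (n + 2 + 1) (Or.inr (by omega)) _
      · simp [h] at hε
    · rw [if_pos (by omega), h1]
      simp [hs0]

/-! ### Combinatorics of `Rinv` -/

theorem Rinv_lo {l : ℕ} (hl : l ≤ n + 1) (h : l = 0 ∨ ε l = false) :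
    l < Rinv n ε l ∧ Rinv n ε l ≤ n + 2 ∧ (∀ x, l < x → x < Rinv n ε l → ε x = true) ∧
      (Rinv n ε l = n + 2 ∨ ε (Rinv n ε l) = false) := by
  have hR : Rinv n ε l = sInf ({n + 2} ∪ {x | l < x ∧ x ≤ n + 1 ∧ ε x = false}) := by
    unfold Rinv
    rw [if_neg (by omega), if_neg]
    rintro ⟨h1, h2, h3⟩
    rcases h with rfl | h
    · omega
    · simp [h] at h3
  have hmem : sInf ({n + 2} ∪ {x | l < x ∧ x ≤ n + 1 ∧ ε x = false}) ∈
      ({n + 2} ∪ {x | l < x ∧ x ≤ n + 1 ∧ ε x = false} : Set ℕ) :=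
    Nat.sInf_mem ⟨n + 2, Or.inl rfl⟩
  have hle : ∀ x ∈ ({n + 2} ∪ {x | l < x ∧ x ≤ n + 1 ∧ ε x = false} : Set ℕ),
      sInf ({n + 2} ∪ {x | l < x ∧ x ≤ n + 1 ∧ ε x = false}) ≤ x := fun x hx => Nat.sInf_le hx
  rw [← hR] at hmem hle
  generalize Rinv n ε l = r at hmem hle
  have h2 := hle (n + 2) (Or.inl rfl)
  refine ⟨?_, h2, fun x h3 h4 => ?_, ?_⟩
  · rcases hmem with h | h
    · rw [Set.mem_singleton_iff] at h; omega
    · exact h.1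
  · by_contra hc
    have := hle x (Or.inr ⟨h3, by omega, by simpa using hc⟩)
    omega
  · rcases hmem with h | h
    · exact Or.inl h
    · exact Or.inr h.2.2

theorem Rinv_hi {l : ℕ} (h : l = n + 2 ∨ (1 ≤ l ∧ l ≤ n + 1 ∧ ε l = true)) :
    Rinv n ε l < l ∧ (∀ x, Rinv n ε l < x → x < l → ε x = false) ∧
      (Rinv n ε l = 0 ∨ ε (Rinv n ε l) = true) := by
  have hR : Rinv n ε l = sSup ({0} ∪ {x | 1 ≤ x ∧ x < l ∧ ε x = true}) := by
    unfold Rinv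
    rcases h with rfl | h
    · rw [if_pos rfl]
      simp only [Nat.lt_succ_iff]
    · rw [if_neg (by omega), if_pos h]
  have hbdd : BddAbove ({0} ∪ {x | 1 ≤ x ∧ x < l ∧ ε x = true} : Set ℕ) := by
    refine ⟨l, ?_⟩
    rintro x (hx | hx)
    · rw [Set.mem_singleton_iff] at hx; omega
    · exact hx.2.1.le
  have hmem : sSup ({0} ∪ {x | 1 ≤ x ∧ x < l ∧ ε x = true}) ∈
      ({0} ∪ {x | 1 ≤ x ∧ x < l ∧ ε x = true} : Set ℕ) :=
    Nat.sSup_mem ⟨0, Or.inl rfl⟩ hbdd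
  have hle : ∀ x ∈ ({0} ∪ {x | 1 ≤ x ∧ x < l ∧ ε x = true} : Set ℕ),
      x ≤ sSup ({0} ∪ {x | 1 ≤ x ∧ x < l ∧ ε x = true}) := fun x hx => le_csSup hbdd hx
  rw [← hR] at hmem hle
  generalize Rinv n ε l = r at hmem hle
  refine ⟨?_, fun x h3 h4 => ?_, ?_⟩
  · rcases hmem with h | h
    · rw [Set.mem_singleton_iff] at h; omega
    · exact h.2.1
  · by_contra hc
    have := hle x (Or.inr ⟨by omega, h4, by simpa using hc⟩)
    omega
  · rcases hmem with h | h
    · exact Or.inl h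
    · exact Or.inr h.2.2

def LRel (ε : ℕ → Bool) (i i' : ℕ) : Prop :=
  i = i' ∨ (i < i' ∧ ε i' = false) ∨ (i' < i ∧ ε i = true)

def RRel (ε : ℕ → Bool) (j j' : ℕ) : Prop :=
  j = j' ∨ (j' < j ∧ ε j' = true) ∨ (j < j' ∧ ε j = false)

theorem LRel.antisymm {i i' : ℕ} (h1 : LRel ε i i') (h2 : LRel ε i' i) : i = i' := by
  rcases h1 with h | ⟨h, h'⟩ | ⟨h, h'⟩ <;> rcases h2 with g | ⟨g, g'⟩ | ⟨g, g'⟩ <;>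
    first | omega | simp_all

theorem RRel.antisymm {i i' : ℕ} (h1 : RRel ε i i') (h2 : RRel ε i' i) : i = i' := by
  rcases h1 with h | ⟨h, h'⟩ | ⟨h, h'⟩ <;> rcases h2 with g | ⟨g, g'⟩ | ⟨g, g'⟩ <;>
    first | omega | simp_all

theorem comb_left {i j i' : ℕ} (h1 : i < j) (h2 : j ≤ n + 2) (h3 : i' < j)
    (hne : i ≠ i') (hL : LRel ε i i') :
    Rinv n ε i < j ∧ LRel ε i (Rinv n ε i) ∧ LRel ε (Rinv n ε i) i' ∧
      Rinv n ε i ≤ max i i' ∧ Rinv n ε i ≠ i := by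
  by_cases hi : i = 0 ∨ ε i = false
  · obtain ⟨a, b, c, d⟩ := Rinv_lo (n := n) (by omega) hi
    generalize Rinv n ε i = r at a b c d
    have hL' : i < i' ∧ ε i' = false := by
      rcases hL with h | h | h
      · omega
      · exact h
      · rcases hi with rfl | hi
        · omega
        · simp [hi] at h
    have hr : r ≤ i' := by
      by_contra hc
      have := c i' hL'.1 (by omega)
      simp [hL'.2] at this
    have hr2 : ε r = false := by
      rcases d with d | d
      · omega
      · exact d
    refine ⟨by omega, Or.inr (Or.inl ⟨a, hr2⟩), ?_, by omega, by omega⟩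
    rcases Nat.eq_or_lt_of_le hr with h | h
    · exact Or.inl h
    · exact Or.inr (Or.inl ⟨h, hL'.2⟩)
  · push Not at hi
    have hε : ε i = true := by simpa using hi.2
    obtain ⟨a, c, d⟩ := Rinv_hi (n := n) (Or.inr ⟨by omega, by omega, hε⟩)
    generalize Rinv n ε i = r at a c d
    refine ⟨by omega, Or.inr (Or.inr ⟨a, hε⟩), ?_, by omega, by omega⟩
    rcases Nat.lt_trichotomy r i' with h | h | h
    · refine Or.inr (Or.inl ⟨h, ?_⟩)
      rcases hL with h' | h' | h'
      · omega
      · exact h'.2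
      · exact c i' h h'.1
    · exact Or.inl h
    · refine Or.inr (Or.inr ⟨h, ?_⟩)
      rcases d with d | d
      · omega
      · exact d

theorem comb_right {i j j' : ℕ} (h1 : i < j) (h2 : j ≤ n + 2) (h3 : i < j') (h4 : j' ≤ n + 2)
    (hne : j ≠ j') (hL : RRel ε j j') :
    i < Rinv n ε j ∧ Rinv n ε j ≤ n + 2 ∧ RRel ε j (Rinv n ε j) ∧ RRel ε (Rinv n ε j) j' ∧
      min j j' ≤ Rinv n ε j ∧ Rinv n ε j ≠ j := by
  by_cases hj : j = n + 2 ∨ ε j = true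
  · have hj' : j = n + 2 ∨ (1 ≤ j ∧ j ≤ n + 1 ∧ ε j = true) := by
      by_cases h : j = n + 2
      · exact Or.inl h
      · exact Or.inr ⟨by omega, by omega, hj.resolve_left h⟩
    obtain ⟨a, c, d⟩ := Rinv_hi hj'
    generalize Rinv n ε j = r at a c d
    have hL' : j' < j ∧ ε j' = true := by
      rcases hL with h | h | h
      · omega
      · exact h
      · rcases hj with rfl | hj
        · omega
        · simp [hj] at h
    have hr : j' ≤ r := by
      by_contra hc
      have := c j' (by omega) hL'.1
      simp [hL'.2] at this
    have hr2 : ε r = true := by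
      rcases d with d | d
      · omega
      · exact d
    refine ⟨by omega, by omega, Or.inr (Or.inl ⟨a, hr2⟩), ?_, by omega, by omega⟩
    rcases Nat.eq_or_lt_of_le hr with h | h
    · exact Or.inl h.symm
    · exact Or.inr (Or.inl ⟨h, hL'.2⟩)
  · push Not at hj
    have hε : ε j = false := by simpa using hj.2
    obtain ⟨a, b, c, d⟩ := Rinv_lo (n := n) (l := j) (by omega) (Or.inr hε)
    generalize Rinv n ε j = r at a b c d
    refine ⟨by omega, by omega, Or.inr (Or.inr ⟨a, hε⟩), ?_, by omega, by omega⟩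
    rcases Nat.lt_trichotomy r j' with h | h | h
    · refine Or.inr (Or.inr ⟨h, ?_⟩)
      rcases d with d | d
      · omega
      · exact d
    · exact Or.inl h
    · refine Or.inr (Or.inl ⟨h, ?_⟩)
      rcases hL with h' | h' | h'
      · omega
      · exact h'.2
      · exact c j' h'.1 h

/-! ### Morphisms between interval representations -/

theorem can_hom {i j i' j' : ℕ} (h2 : j ≤ n + 2) (h4 : j' ≤ n + 2)
    (hL : LRel ε i i') (hR : RRel ε j j') :
    ∃ f : (intervalRep k n ε (i + 1) j).Hom (intervalRep k n ε (i' + 1) j'),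
      ∀ x v, cof k n ε (i' + 1) j' x (f.app x v) =
        if i' < x ∧ x ≤ j' then cof k n ε (i + 1) j x v else 0 := by
  have key : HFun (intervalRep k n ε (i + 1) j) i' j'
      (fun x => if i' < x ∧ x ≤ j' then cof k n ε (i + 1) j x else 0) := by
    refine fun_of_chain (fun x hx1 hx2 => ⟨fun hε v => ?_, fun hε v => ?_⟩)
      (fun hε v => ?_) (fun hε v => ?_)
    · rw [cof_fwd]
      simp only [supp_iff h2]
      by_cases hx : i < x ∧ x ≤ j
      · rw [if_pos]
        refine ⟨hε, hx, by omega, ?_⟩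
        by_contra hc
        obtain rfl : x = j := by omega
        rcases hR with h | h | h
        · omega
        · omega
        · simp [hε] at h
      · rw [cof_zero (by rwa [supp_iff h2])]; simp
    · rw [cof_bwd]
      simp only [supp_iff h2]
      by_cases hx : i < x + 1 ∧ x + 1 ≤ j
      · rw [if_pos]
        refine ⟨hε, ⟨?_, by omega⟩, hx⟩
        by_contra hc
        obtain rfl : x = i := by omega
        rcases hL with h | h | h
        · omega
        · omega
        · simp [hε] at h
      · rw [cof_zero (by rwa [supp_iff h2])]; simp
    · rw [cof_fwd, if_neg]
      simp only [supp_iff h2]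
      rintro ⟨-, ⟨h, -⟩, -⟩
      rcases hL with h | h | h
      · omega
      · simp [hε] at h
      · omega
    · rw [cof_bwd, if_neg]
      simp only [supp_iff h2]
      rintro ⟨-, -, -, h⟩
      rcases hR with h | h | h
      · omega
      · simp [hε] at h
      · omega
  obtain ⟨f, hf⟩ := hom_of_fun h4 key
  refine ⟨f, fun x v => ?_⟩
  rw [hf]
  split_ifs <;> rfl

theorem hom_scalar {i j i' j' : ℕ} (h1 : i < j) (h2 : j ≤ n + 2) (h3 : i' < j')
    (h4 : j' ≤ n + 2)
    (f : (intervalRep k n ε (i + 1) j).Hom (intervalRep k n ε (i' + 1) j')) :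
    ∃ c : k, (∀ x v, cof k n ε (i' + 1) j' x (f.app x v) =
        if i' < x ∧ x ≤ j' then c * cof k n ε (i + 1) j x v else 0) ∧
      (c ≠ 0 → LRel ε i i' ∧ RRel ε j j' ∧ i < j' ∧ i' < j) := by
  obtain ⟨Φ, hΦ, hΦ'⟩ := fun_of_hom h4 f
  obtain ⟨u, hu, hu'⟩ := elt_of_hom h2 (ARep.Hom.id (intervalRep k n ε (i + 1) j))
  have hu'' : ∀ x v, v = cof k n ε (i + 1) j x v • u x := hu'
  by_cases ho : i < j' ∧ i' < j
  · refine ⟨Φ (max i i' + 1) (u (max i i' + 1)), fun x v => ?_, fun hc => ?_⟩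
    · rw [hΦ']
      split_ifs with hx
      · by_cases hx' : i < x ∧ x ≤ j
        · conv_lhs => rw [hu'' x v]
          rw [map_smul, pair_const hu hΦ (x := x) (y := max i i' + 1) (by omega) (by omega),
            smul_eq_mul, mul_comm]
        · have hz := cof_zero (k := k) (ε := ε) (n := n) (a := i + 1) (b := j) (x := x)
            (by rwa [supp_iff h2]) v
          rw [hu'' x v, hz]; simp
      · rw [hΦ.1 x hx]; rfl
    · have hc' : ∀ y, i < y ∧ y ≤ j ∧ i' < y ∧ y ≤ j' → Φ y (u y) ≠ 0 := by
        intro y hy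
        rwa [pair_const hu hΦ (x := y) (y := max i i' + 1) hy (by omega)]
      refine ⟨?_, ?_, ho⟩
      · rcases Nat.lt_trichotomy i i' with h | h | h
        · refine Or.inr (Or.inl ⟨h, ?_⟩)
          by_contra hε
          have hε : ε i' = true := by simpa using hε
          apply hc' (i' + 1) (by omega)
          rw [hu.2.1 i' h (by omega) hε, ← hΦ.2.1 i' (by omega) (by omega) hε,
            hΦ.1 i' (by omega)]
          rfl
        · exact Or.inl h
        · refine Or.inr (Or.inr ⟨h, ?_⟩)
          by_contra hε
          have hε : ε i = false := by simpa using hε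
          apply hc' (i + 1) (by omega)
          rw [hΦ.2.2 i h (by omega) hε, ← hu.2.2 i (by omega) (by omega) hε,
            hu.1 i (by omega), map_zero]
      · rcases Nat.lt_trichotomy j j' with h | h | h
        · refine Or.inr (Or.inr ⟨h, ?_⟩)
          by_contra hε
          have hε : ε j = true := by simpa using hε
          apply hc' j (by omega)
          rw [hΦ.2.1 j (by omega) (by omega) hε, ← hu.2.1 j (by omega) (by omega) hε,
            hu.1 (j + 1) (by omega), map_zero]
        · exact Or.inl h
        · refine Or.inr (Or.inl ⟨h, ?_⟩)
          by_contra hε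
          have hε : ε j' = false := by simpa using hε
          apply hc' j' (by omega)
          rw [hu.2.2 j' (by omega) (by omega) hε, ← hΦ.2.2 j' (by omega) (by omega) hε,
            hΦ.1 (j' + 1) (by omega)]
          rfl
  · refine ⟨0, fun x v => ?_, fun h => absurd rfl h⟩
    rw [hΦ']
    by_cases hx : i' < x ∧ x ≤ j'
    · have hz := cof_zero (k := k) (ε := ε) (n := n) (a := i + 1) (b := j) (x := x)
        (by rw [supp_iff h2]; omega) v
      rw [hu'' x v, hz]; simp
    · rw [hΦ.1 x hx, if_neg hx]; rfl

theorem both_ways {i j i' j' : ℕ} (h1 : i < j) (h2 : j ≤ n + 2) (h3 : i' < j')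
    (h4 : j' ≤ n + 2)
    (f : (intervalRep k n ε (i + 1) j).Hom (intervalRep k n ε (i' + 1) j'))
    (g : (intervalRep k n ε (i' + 1) j').Hom (intervalRep k n ε (i + 1) j))
    (h : ∀ x v, g.app x (f.app x v) = v) : i = i' ∧ j = j' := by
  obtain ⟨c, hc, hc'⟩ := hom_scalar h1 h2 h3 h4 f
  obtain ⟨d, hd, hd'⟩ := hom_scalar h3 h4 h1 h2 g
  obtain ⟨v, hv⟩ := cof_surj (k := k) (ε := ε) (n := n) (a := i + 1) (b := j) (x := j)
    (by rw [supp_iff h2]; omega) 1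
  have hh := hd j (f.app j v)
  rw [h, hc, hv, if_pos (by omega)] at hh
  have hc0 : c ≠ 0 := by rintro rfl; simp at hh
  have hd0 : d ≠ 0 := by rintro rfl; simp at hh
  exact ⟨(hc' hc0).1.antisymm (hd' hd0).1, (hc' hc0).2.1.antisymm (hd' hd0).2.1⟩

theorem irred_pivot {i j i' j' : ℕ} (h1 : i < j) (h2 : j ≤ n + 2) (h3 : i' < j')
    (h4 : j' ≤ n + 2) (hne : (i, j) ≠ (i', j'))
    (f : (intervalRep k n ε (i + 1) j).Hom (intervalRep k n ε (i' + 1) j')) (hf : f.Irred) :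
    IsPivot n ε i j i' j' := by
  obtain ⟨c, hc, hc'⟩ := hom_scalar h1 h2 h3 h4 f
  have hc0 : c ≠ 0 := by
    rintro rfl
    have hz : ∀ x v, f.app x v = 0 := by
      intro x v
      apply cof_inj
      rw [hc]; simp
    rcases hf.2.2 (zeroRep k n ε) ⟨fun _ => 0, by simp, by simp⟩ ⟨fun _ => 0, by simp, by simp⟩
      (by intro x v; rw [hz]; rfl) with ⟨r, hr⟩ | ⟨r, hr⟩
    · obtain ⟨v, hv⟩ := cof_surj (k := k) (ε := ε) (n := n) (a := i + 1) (b := j) (x := j)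
        (by rw [supp_iff h2]; omega) 1
      have := hr j v
      simp only [LinearMap.zero_apply, map_zero] at this
      rw [← this, map_zero] at hv
      exact zero_ne_one hv
    · obtain ⟨v, hv⟩ := cof_surj (k := k) (ε := ε) (n := n) (a := i' + 1) (b := j') (x := j')
        (by rw [supp_iff h4]; omega) 1
      have := hr j' v
      simp only [LinearMap.zero_apply] at this
      rw [← this, map_zero] at hv
      exact zero_ne_one hv
  obtain ⟨hL, hR, ho1, ho2⟩ := hc' hc0
  obtain ⟨a, b, hab, hpiv, hb, hL1, hR1, hL2, hR2, ha3, hb3, hne'⟩ : ∃ a b, a < b ∧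
      IsPivot n ε i j a b ∧ b ≤ n + 2 ∧ LRel ε i a ∧ RRel ε j b ∧ LRel ε a i' ∧ RRel ε b j' ∧
      a ≤ max i i' ∧ min j j' ≤ b ∧ ¬(i = a ∧ j = b) := by
    by_cases hi : i = i'
    · have hj : j ≠ j' := by
        rintro rfl; subst hi; exact hne rfl
      obtain ⟨q1, q2, q3, q4, q5, q6⟩ := comb_right h1 h2 ho1 h4 hj hR
      exact ⟨i, Rinv n ε j, q1, Or.inr ⟨rfl, rfl, q1⟩, q2, Or.inl rfl, q3, hL, q4,
        le_max_left _ _, q5, fun h => q6 h.2.symm⟩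
    · obtain ⟨q1, q2, q3, q4, q5⟩ := comb_left h1 h2 ho2 hi hL
      exact ⟨Rinv n ε i, j, q1, Or.inl ⟨rfl, rfl, q1⟩, h2, q2, Or.inl rfl, q3, hR, q4,
        min_le_left _ _, fun h => q5 h.1.symm⟩
  obtain ⟨f1, hf1⟩ := can_hom (k := k) h2 hb hL1 hR1
  obtain ⟨f2, hf2⟩ := can_hom (k := k) hb h4 hL2 hR2
  rcases hf.2.2 _ f1 (f2.smul c) (by
    intro x v
    apply cof_inj
    show _ = cof k n ε (i' + 1) j' x (c • f2.app x (f1.app x v))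
    rw [map_smul, hf2, hf1, hc]
    by_cases hx : i' < x ∧ x ≤ j'
    · rw [if_pos hx, if_pos hx]
      by_cases hx' : i < x ∧ x ≤ j
      · rw [if_pos (by omega)]; rfl
      · rw [cof_zero (by rwa [supp_iff h2])]; simp
    · rw [if_neg hx, if_neg hx]; simp) with ⟨r, hr⟩ | ⟨r, hr⟩
  · exact absurd (both_ways h1 h2 hab hb _ _ hr) hne'
  · obtain ⟨rfl, rfl⟩ := both_ways h3 h4 hab hb _ _ hr
    exact hpiv

theorem sec_of {Z : ARep k n ε} {i j y : ℕ} (h2 : j ≤ n + 2)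
    (h : (intervalRep k n ε (i + 1) j).Hom Z) {u : ∀ x, Z.V x} (hu : HElt Z i j u)
    (hh : ∀ x v, h.app x v = cof k n ε (i + 1) j x v • u x) {Φ : ∀ x, Z.V x →ₗ[k] k}
    (hΦ : HFun Z i j Φ) (hy : i < y ∧ y ≤ j) (h1 : Φ y (u y) = 1) : h.IsSection := by
  obtain ⟨r, hr⟩ := hom_of_fun h2 hΦ
  refine ⟨r, fun x v => ?_⟩
  apply cof_inj
  rw [hr, hh, map_smul]
  by_cases hx : i < x ∧ x ≤ j
  · rw [pair_const hu hΦ (x := x) (y := y) (by omega) (by omega), h1, smul_eq_mul, mul_one]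
  · rw [cof_zero (by rwa [supp_iff h2]), zero_smul]

theorem ret_of {Z : ARep k n ε} {i j y : ℕ} (h2 : j ≤ n + 2)
    (g : Z.Hom (intervalRep k n ε (i + 1) j)) {Φ : ∀ x, Z.V x →ₗ[k] k} (hΦ : HFun Z i j Φ)
    (hh : ∀ x v, cof k n ε (i + 1) j x (g.app x v) = Φ x v) {u : ∀ x, Z.V x}
    (hu : HElt Z i j u) (hy : i < y ∧ y ≤ j) (h1 : Φ y (u y) = 1) : g.IsRetraction := by
  obtain ⟨r, hr⟩ := hom_of_elt h2 hu
  refine ⟨r, fun x v => ?_⟩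
  apply cof_inj
  rw [hh, hr, map_smul]
  by_cases hx : i < x ∧ x ≤ j
  · rw [pair_const hu hΦ (x := x) (y := y) (by omega) (by omega), h1, smul_eq_mul, mul_one]
  · rw [cof_zero (by rwa [supp_iff h2]), zero_smul]

theorem irred_of {i j i' j' : ℕ} (h1 : i < j) (h2 : j ≤ n + 2) (h3 : i' < j')
    (h4 : j' ≤ n + 2) (hne : (i, j) ≠ (i', j')) (hL : LRel ε i i') (hR : RRel ε j j')
    (H : ∀ (Z : ARep k n ε) (u : ∀ x, Z.V x) (G : ∀ x, Z.V x →ₗ[k] k), HElt Z i j u →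
      HFun Z i' j' G → (∀ x, i < x → x ≤ j → i' < x → x ≤ j' → G x (u x) = 1) →
      (∃ y, (i < y ∧ y ≤ j) ∧ ∃ Φ, HFun Z i j Φ ∧ Φ y (u y) = 1) ∨
      (∃ y, (i' < y ∧ y ≤ j') ∧ ∃ s, HElt Z i' j' s ∧ G y (s y) = 1)) :
    ∃ f : (intervalRep k n ε (i + 1) j).Hom (intervalRep k n ε (i' + 1) j'), f.Irred := by
  obtain ⟨f, hf⟩ := can_hom (k := k) h2 h4 hL hR
  refine ⟨f, ?_, ?_, fun Z h g hfac => ?_⟩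
  · rintro ⟨r, hr⟩
    obtain ⟨rfl, rfl⟩ := both_ways h1 h2 h3 h4 _ _ hr
    exact hne rfl
  · rintro ⟨r, hr⟩
    obtain ⟨rfl, rfl⟩ := both_ways h3 h4 h1 h2 _ _ hr
    exact hne rfl
  · obtain ⟨u, hu, hu'⟩ := elt_of_hom h2 h
    obtain ⟨G, hG, hG'⟩ := fun_of_hom h4 g
    rcases H Z u G hu hG (by
      intro x a b c d
      obtain ⟨v, hv⟩ := cof_surj (k := k) (ε := ε) (n := n) (a := i + 1) (b := j) (x := x)
        (by rw [supp_iff h2]; omega) 1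
      have := hf x v
      rw [hfac, hG', hu', hv, one_smul, if_pos ⟨c, d⟩] at this
      exact this) with ⟨y, hy, Φ, hΦ, hΦ1⟩ | ⟨y, hy, s, hs, hs1⟩
    · exact Or.inl (sec_of h2 h hu hu' hΦ hy hΦ1)
    · exact Or.inr (ret_of h4 g hG hG' hs hy hs1)

theorem pivot_irred {i j i' j' : ℕ} (h1 : i < j) (h2 : j ≤ n + 2) (h3 : i' < j')
    (h4 : j' ≤ n + 2) (hne : (i, j) ≠ (i', j')) (hp : IsPivot n ε i j i' j') :
    ∃ f : (intervalRep k n ε (i + 1) j).Hom (intervalRep k n ε (i' + 1) j'), f.Irred := by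
  rcases hp with ⟨hi', rfl, -⟩ | ⟨rfl, hj', -⟩
  · by_cases hi : i = 0 ∨ ε i = false
    · obtain ⟨a, b, c, d⟩ := Rinv_lo (n := n) (by omega) hi
      rw [← hi'] at a b c d
      have d' : ε i' = false := d.resolve_left (by omega)
      refine irred_of h1 h2 h3 h4 hne (Or.inr (Or.inl ⟨a, d'⟩)) (Or.inl rfl)
        (fun Z u G hu hG hp => ?_)
      rcases case_LE a h3 hi d' c hu hG (hp _ h1 le_rfl h3 le_rfl) with h | h
      · exact Or.inl ⟨i + 1, by omega, h⟩
      · exact Or.inr ⟨_, by omega, h⟩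
    · push Not at hi
      have hε : ε i = true := by simpa using hi.2
      obtain ⟨a, c, d⟩ := Rinv_hi (n := n) (Or.inr ⟨by omega, by omega, hε⟩)
      rw [← hi'] at a c d
      refine irred_of h1 h2 h3 h4 hne (Or.inr (Or.inr ⟨a, hε⟩)) (Or.inl rfl)
        (fun Z u G hu hG hp => ?_)
      rcases case_LM a h1 hε d c hu hG (hp _ h1 le_rfl h3 le_rfl) with h | h
      · exact Or.inl ⟨_, by omega, h⟩
      · exact Or.inr ⟨i' + 1, by omega, h⟩
  · by_cases hj : j = n + 2 ∨ ε j = true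
    · have hjj : j = n + 2 ∨ (1 ≤ j ∧ j ≤ n + 1 ∧ ε j = true) := by
        by_cases h : j = n + 2
        · exact Or.inl h
        · exact Or.inr ⟨by omega, by omega, hj.resolve_left h⟩
      obtain ⟨a, c, d⟩ := Rinv_hi hjj
      rw [← hj'] at a c d
      have d' : ε j' = true := d.resolve_left (by omega)
      refine irred_of h1 h2 h3 h4 hne (Or.inl rfl) (Or.inr (Or.inl ⟨a, d'⟩))
        (fun Z u G hu hG hp => ?_)
      rcases case_RE a h3 hj d' c hu hG
        (hp _ (by omega) (by omega) (by omega) (by omega)) with h | h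
      · exact Or.inl ⟨j, by omega, h⟩
      · exact Or.inr ⟨_, by omega, h⟩
    · push Not at hj
      have hε : ε j = false := by simpa using hj.2
      obtain ⟨a, b, c, d⟩ := Rinv_lo (n := n) (l := j) (by omega) (Or.inr hε)
      rw [← hj'] at a b c d
      refine irred_of h1 h2 h3 h4 hne (Or.inl rfl) (Or.inr (Or.inr ⟨a, hε⟩))
        (fun Z u G hu hG hp => ?_)
      rcases case_RM a h1 hε d c hu hG
        (hp _ (by omega) (by omega) (by omega) (by omega)) with h | h
      · exact Or.inl ⟨_, by omega, h⟩
      · exact Or.inr ⟨j', by omega, h⟩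

end Proofs

/-- there is an irreducible morphism `M(i+1,j) → M(i′+1,j′)` if and only if
`γ(i′,j′)` is a pivot of `γ(i,j)`. -/
theorem stmt_7 (k : Type) [Field k] (n : ℕ) (ε : ℕ → Bool) (i j i' j' : ℕ)
    (h1 : i < j) (h2 : j ≤ n + 2) (h3 : i' < j') (h4 : j' ≤ n + 2)
    (hne : (i, j) ≠ (i', j')) :
    (∃ f : (intervalRep k n ε (i + 1) j).Hom (intervalRep k n ε (i' + 1) j'), f.Irred) ↔
      IsPivot n ε i j i' j' := by
  exact ⟨fun ⟨f, hf⟩ => irred_pivot h1 h2 h3 h4 hne f hf, fun hp => pivot_irred h1 h2 h3 h4 hne hp⟩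

end CambrianA
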